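/- arXiv:1511.05583 — 3 statements merged into one kernel-verified Lean document; each statement's English description precedes it below -/
import Mathlib

section
/- Let P ≥ 1 and 1 ≤ p ≤ P be integers and let t be a real number. Let μ_{a,m}^{⊗P} denote the P-fold product of μ_{a,m} on ℝ^P. Then the probability that at least p of the P coordinates exceed t (the outage event of the p-th ordered user in Theorem 1) satisfies μ_{a,m}^{⊗P}({x ∈ ℝ^P : #{i : x_i > t} ≥ p}) = ∑_{i=0}^{p-1} C(p-1,i) (-1)^i π_p^P (1 - F_{a,m}(t)^{P-p+i+1})/(P-p+i+1), where π_p^P = P!/((P-p)!(p-1)!) and C(p-1,i) is the binomial coefficient. -/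
open MeasureTheory

/-- The inverse-gamma density with shape `m+1` and scale `1/a`:
`f a m x = x^{-(m+2)} e^{-1/(a x)} / (m! a^{m+1})` for `x > 0`, and `0` otherwise. -/
noncomputable def invGammaDensity (a : ℝ) (m : ℕ) (x : ℝ) : ℝ :=
  if 0 < x then x ^ (-((m : ℤ) + 2)) * Real.exp (-(1 / (a * x))) / (m.factorial * a ^ (m + 1))
  else 0

/-- The inverse-gamma probability measure `μ_{a,m}` on `ℝ`. -/
noncomputable def invGammaMeasure (a : ℝ) (m : ℕ) : Measure ℝ :=
  volume.withDensity (fun x => ENNReal.ofReal (invGammaDensity a m x))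

/-- The CDF `F_{a,m}(t) = μ_{a,m}((-∞, t])` of the inverse-gamma law. -/
noncomputable def invGammaCDF (a : ℝ) (m : ℕ) (t : ℝ) : ℝ :=
  (invGammaMeasure a m (Set.Iic t)).toReal

/-!
Each coordinate exceeds `t` independently with probability `1 - F`, `F = F_{a,m}(t)`, so the number
of coordinates that do not exceed `t` is binomial with parameters `P` and `F`, and the outage
probability is the sum of the Bernstein polynomials `B_{P,j}(F)` over `j ≤ P - p`. The derivatives
of these polynomials telescope, which writes the sum as `P ∫_F^1 B_{P-1,P-p}(u) du`; expanding
`(1 - u)^{p-1}` under the integral gives the formula. That `μ_{a,m}` has total mass one reduces to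
the same fact about the gamma distribution by the substitution `x ↦ x⁻¹`.
-/

open ProbabilityTheory Set

section InverseGamma

theorem lintegral_comp_inv_Ioi (g : ℝ → ENNReal) :
    ∫⁻ x in Ioi (0 : ℝ), ENNReal.ofReal (x ^ 2)⁻¹ * g x⁻¹ = ∫⁻ y in Ioi 0, g y := by
  have hderiv : ∀ x ∈ Ioi (0 : ℝ), HasDerivWithinAt Inv.inv (-(x ^ 2)⁻¹) (Ioi 0) x :=
    fun x hx ↦ (hasDerivAt_inv (ne_of_gt hx)).hasDerivWithinAt
  have himage : Inv.inv '' Ioi (0 : ℝ) = Ioi 0 := by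
    ext x
    simp
  have hsubst := lintegral_image_eq_lintegral_abs_deriv_mul measurableSet_Ioi hderiv
    inv_injective.injOn g
  simp only [himage, abs_neg] at hsubst
  rw [hsubst]
  refine setLIntegral_congr_fun measurableSet_Ioi fun x _ ↦ ?_
  simp only [abs_of_nonneg (inv_nonneg.2 (sq_nonneg x))]

theorem ofReal_invGammaDensity_eq_gammaPDF_inv {a x : ℝ} (ha : 0 < a) (hx : 0 < x) (m : ℕ) :
    ENNReal.ofReal (invGammaDensity a m x)
      = ENNReal.ofReal (x ^ 2)⁻¹ * gammaPDF (m + 1) a⁻¹ x⁻¹ := by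
  have hzpow : x ^ (-((m : ℤ) + 2)) = (x ^ 2)⁻¹ * x⁻¹ ^ m := by
    rw [zpow_neg, inv_pow, ← mul_inv, ← pow_add, add_comm 2 m]
    norm_cast
  have hrpow : a⁻¹ ^ ((m : ℝ) + 1) = (a ^ (m + 1))⁻¹ := by
    rw [← inv_pow]
    exact_mod_cast Real.rpow_natCast a⁻¹ (m + 1)
  rw [gammaPDF_of_nonneg (inv_nonneg.2 hx.le), ← ENNReal.ofReal_mul (by positivity),
    Real.Gamma_nat_eq_factorial, add_sub_cancel_right, Real.rpow_natCast, invGammaDensity,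
    if_pos hx, hzpow, hrpow, one_div, mul_inv a x]
  congr 1
  field_simp

theorem lintegral_invGammaDensity_eq_one {a : ℝ} (ha : 0 < a) (m : ℕ) :
    ∫⁻ x, ENNReal.ofReal (invGammaDensity a m x) = 1 := by
  calc ∫⁻ x, ENNReal.ofReal (invGammaDensity a m x)
      = ∫⁻ x in Ioi 0, ENNReal.ofReal (invGammaDensity a m x) := by
        refine (setLIntegral_eq_of_support_subset fun x hx ↦ ?_).symm
        contrapose! hx
        simp [invGammaDensity, show ¬0 < x from hx]
    _ = ∫⁻ x in Ioi 0, ENNReal.ofReal (x ^ 2)⁻¹ * gammaPDF (m + 1) a⁻¹ x⁻¹ :=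
        setLIntegral_congr_fun measurableSet_Ioi fun _ hx ↦
          ofReal_invGammaDensity_eq_gammaPDF_inv ha hx m
    _ = ∫⁻ y in Ioi 0, gammaPDF (m + 1) a⁻¹ y := lintegral_comp_inv_Ioi _
    _ = ∫⁻ y, gammaPDF (m + 1) a⁻¹ y := by
        rw [setLIntegral_congr Ioi_ae_eq_Ici]
        refine setLIntegral_eq_of_support_subset fun y hy ↦ ?_
        contrapose! hy
        simp_all [gammaPDF_of_neg]
    _ = 1 := lintegral_gammaPDF_eq_one (by positivity) (by positivity)

theorem isProbabilityMeasure_invGammaMeasure {a : ℝ} (ha : 0 < a) (m : ℕ) :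
    IsProbabilityMeasure (invGammaMeasure a m) where
  measure_univ := by simp [invGammaMeasure, lintegral_invGammaDensity_eq_one ha m]

end InverseGamma

section Bernstein

theorem derivative_sum_range_bernsteinPolynomial (R : Type*) [CommRing R] (n ν : ℕ) :
    Polynomial.derivative (∑ j ∈ Finset.range (ν + 1), bernsteinPolynomial R n j)
      = -n * bernsteinPolynomial R (n - 1) ν := by
  induction ν with
  | zero => simp [bernsteinPolynomial.derivative_zero]
  | succ ν ih =>
    rw [Finset.sum_range_succ, map_add, ih, bernsteinPolynomial.derivative_succ]
    ring

theorem sum_range_eval_bernsteinPolynomial_eq_integral {n ν : ℕ} (hν : ν < n) (x : ℝ) :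
    ∑ j ∈ Finset.range (ν + 1), (bernsteinPolynomial ℝ n j).eval x
      = n * ∫ y in x..1, (bernsteinPolynomial ℝ (n - 1) ν).eval y := by
  set B := ∑ j ∈ Finset.range (ν + 1), bernsteinPolynomial ℝ n j with hB
  have heval_one : B.eval 1 = 0 := by
    rw [hB, Polynomial.eval_finsetSum]
    refine Finset.sum_eq_zero fun j hj ↦ ?_
    rw [bernsteinPolynomial.eval_at_1, if_neg (by grind)]
  have hftc : ∫ y in x..1, B.derivative.eval y = B.eval 1 - B.eval x :=
    intervalIntegral.integral_eq_sub_of_hasDerivAt (fun y _ ↦ B.hasDerivAt y)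
      (B.derivative.continuous.intervalIntegrable _ _)
  rw [hB, derivative_sum_range_bernsteinPolynomial, ← hB, heval_one] at hftc
  simp only [Polynomial.eval_mul, Polynomial.eval_neg, Polynomial.eval_natCast,
    intervalIntegral.integral_const_mul] at hftc
  rw [← Polynomial.eval_finsetSum]
  linarith

theorem integral_pow_mul_one_sub_pow (d s : ℕ) (x y : ℝ) :
    ∫ u in x..y, u ^ d * (1 - u) ^ s
      = ∑ i ∈ Finset.range (s + 1),
          (s.choose i : ℝ) * (-1) ^ i *
            ((y ^ (d + i + 1) - x ^ (d + i + 1)) / (d + i + 1 : ℕ)) := by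
  have hexpand (u : ℝ) : u ^ d * (1 - u) ^ s
      = ∑ i ∈ Finset.range (s + 1), (s.choose i : ℝ) * (-1) ^ i * u ^ (d + i) := by
    rw [sub_eq_neg_add, add_pow, Finset.mul_sum]
    refine Finset.sum_congr rfl fun i _ ↦ ?_
    rw [neg_pow u]
    ring
  simp_rw [hexpand]
  rw [intervalIntegral.integral_finsetSum fun i _ ↦ by
    apply Continuous.intervalIntegrable; fun_prop]
  simp [integral_pow]

theorem sum_range_eval_bernsteinPolynomial_eq_sum_choose (d s : ℕ) (x : ℝ) :
    ∑ j ∈ Finset.range (d + 1), (bernsteinPolynomial ℝ (d + s + 1) j).eval x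
      = ∑ i ∈ Finset.range (s + 1),
          (s.choose i : ℝ) * (-1) ^ i * ((d + s + 1).factorial / (d.factorial * s.factorial)) *
            (1 - x ^ (d + i + 1)) / (d + i + 1 : ℕ) := by
  have heval (u : ℝ) : (bernsteinPolynomial ℝ (d + s) d).eval u
      = (d + s).choose d * (u ^ d * (1 - u) ^ s) := by
    simp [bernsteinPolynomial, mul_assoc]
  have hcoeff : ((d + s + 1 : ℕ) : ℝ) * (d + s).choose d
      = (d + s + 1).factorial / (d.factorial * s.factorial) := by
    rw [Nat.cast_add_choose, Nat.factorial_succ, Nat.cast_mul, mul_div_assoc]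
  rw [sum_range_eval_bernsteinPolynomial_eq_integral (by lia), Nat.add_sub_cancel]
  simp_rw [heval]
  rw [intervalIntegral.integral_const_mul, ← mul_assoc, hcoeff, integral_pow_mul_one_sub_pow,
    Finset.mul_sum]
  refine Finset.sum_congr rfl fun i _ ↦ ?_
  rw [one_pow]
  ring

end Bernstein

section ProductMeasure

variable {ι Ω : Type*} [MeasurableSpace Ω]

theorem map_mem_eq_bernoulliMeasure (μ : Measure Ω) [IsProbabilityMeasure μ] {s : Set Ω}
    (hs : MeasurableSet s) :
    μ.map (· ∈ s) = Ber(True, False, ⟨μ.real s, measureReal_nonneg, measureReal_le_one⟩) := by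
  have hmeas : Measurable (· ∈ s) := measurable_mem.2 hs
  have : IsProbabilityMeasure (μ.map (· ∈ s)) := Measure.isProbabilityMeasure_map hmeas.aemeasurable
  refine Measure.ext_of_measureReal_singleton fun q ↦ ?_
  rw [map_measureReal_apply hmeas (measurableSet_singleton q)]
  by_cases hq : q
  · have hpre : (· ∈ s) ⁻¹' {True} = s := by ext; simp
    simp [hq, hpre]
  · have hpre : (· ∈ s) ⁻¹' {False} = sᶜ := by ext; simp
    simp [hq, hpre, probReal_compl_eq_one_sub hs]

theorem measurable_ofPred_mem {s : Set Ω} (hs : MeasurableSet s) :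
    Measurable fun x : ι → Ω ↦ {i | x i ∈ s} :=
  MeasurableEquiv.setOfPred.measurable.comp <|
    measurable_pi_lambda _ fun i ↦ (measurable_mem.2 hs).comp (measurable_pi_apply i)

theorem isSetBernoulli_infinitePi (μ : Measure Ω) [IsProbabilityMeasure μ] {s : Set Ω}
    (hs : MeasurableSet s) :
    IsSetBernoulli (fun x : ι → Ω ↦ {i | x i ∈ s}) univ
      ⟨μ.real s, measureReal_nonneg, measureReal_le_one⟩ (Measure.infinitePi fun _ ↦ μ) where
  aemeasurable := (measurable_ofPred_mem hs).aemeasurable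
  map_eq := by
    have hmeas : Measurable (· ∈ s) := measurable_mem.2 hs
    simp only [setBernoulli_eq_map, mem_univ, ← bernoulliMeasure_def]
    rw [← map_mem_eq_bernoulliMeasure μ hs, ← Measure.infinitePi_map_pi _ fun _ ↦ hmeas]
    exact (Measure.map_map MeasurableEquiv.setOfPred.measurable
      (measurable_pi_lambda _ fun i ↦ hmeas.comp (measurable_pi_apply i))).symm

variable [Fintype ι]

theorem measureReal_pi_ncard_mem_eq (μ : Measure Ω) [IsProbabilityMeasure μ] {s : Set Ω}
    (hs : MeasurableSet s) (k : ℕ) :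
    (Measure.pi fun _ : ι ↦ μ).real {x | {i | x i ∈ s}.ncard = k}
      = (bernsteinPolynomial ℝ (Fintype.card ι) k).eval (μ.real s) := by
  have hlaw := isSetBernoulli_infinitePi (ι := ι) μ hs
  rw [Measure.infinitePi_eq_pi] at hlaw
  have hncard : Measurable (ncard (α := ι)) := by fun_prop
  rw [hlaw.measureReal_eq (p := (ncard · = k)) (hncard (measurableSet_singleton k))]
  have hcount := map_ncard_setBernoulli_real_singleton (finite_univ (α := ι))
    ⟨μ.real s, measureReal_nonneg, measureReal_le_one⟩ k
  rw [map_measureReal_apply hncard (measurableSet_singleton k)] at hcount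
  simpa [bernsteinPolynomial, ncard_univ, preimage] using hcount

theorem measureReal_pi_ncard_mem_le (μ : Measure Ω) [IsProbabilityMeasure μ] {s : Set Ω}
    (hs : MeasurableSet s) (k : ℕ) :
    (Measure.pi fun _ : ι ↦ μ).real {x | {i | x i ∈ s}.ncard ≤ k}
      = ∑ j ∈ Finset.range (k + 1),
          (bernsteinPolynomial ℝ (Fintype.card ι) j).eval (μ.real s) := by
  have hmeas : Measurable fun x : ι → Ω ↦ {i | x i ∈ s}.ncard :=
    Measurable.comp (g := ncard) (by fun_prop) (measurable_ofPred_mem hs)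
  have hrange : {x : ι → Ω | {i | x i ∈ s}.ncard ≤ k}
      = (fun x ↦ {i | x i ∈ s}.ncard) ⁻¹' (Finset.range (k + 1)) := by
    ext x
    simp
  rw [hrange, ← sum_measureReal_preimage_singleton _ fun j _ ↦ hmeas (measurableSet_singleton j)]
  exact Finset.sum_congr rfl fun j _ ↦ measureReal_pi_ncard_mem_eq μ hs j

theorem outage_probability_ordered_user_general (μ : Measure Ω) [IsProbabilityMeasure μ]
    {s : Set Ω} (hs : MeasurableSet s) {p : ℕ} (hp : 1 ≤ p) (hpι : p ≤ Fintype.card ι) :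
    (Measure.pi fun _ : ι ↦ μ).real {x | p ≤ {i | x i ∉ s}.ncard}
      = ∑ i ∈ Finset.range p,
          ((p - 1).choose i : ℝ) * (-1) ^ i *
            ((Fintype.card ι).factorial / ((Fintype.card ι - p).factorial * (p - 1).factorial)) *
            (1 - μ.real s ^ (Fintype.card ι - p + i + 1)) / (Fintype.card ι - p + i + 1 : ℕ) := by
  obtain ⟨r, rfl⟩ := Nat.exists_eq_add_of_le' hp
  obtain ⟨d, hd⟩ := Nat.exists_eq_add_of_le' hpι
  have hcompl : {x : ι → Ω | r + 1 ≤ {i | x i ∉ s}.ncard} = {x | {i | x i ∈ s}.ncard ≤ d} := by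
    ext x
    have hsplit := ncard_add_ncard_compl {i | x i ∈ s}
    rw [compl_ofPred, Nat.card_eq_fintype_card, hd] at hsplit
    simp only [mem_ofPred_eq]
    lia
  rw [hcompl, measureReal_pi_ncard_mem_le μ hs, hd, Nat.add_sub_cancel, Nat.add_sub_cancel]
  exact sum_range_eval_bernsteinPolynomial_eq_sum_choose d r _

end ProductMeasure

/-- Outage probability of the `p`-th ordered user (Theorem 1): under the `P`-fold product
of `μ_{a,m}`, the probability that at least `p` of the `P` coordinates exceed `t` equals
`∑_{i=0}^{p-1} C(p-1,i) (-1)^i π_p^P (1 - F_{a,m}(t)^{P-p+i+1})/(P-p+i+1)`,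
where `π_p^P = P!/((P-p)!(p-1)!)`. -/
theorem outage_probability_ordered_user (a : ℝ) (ha : 0 < a) (m : ℕ)
    (P p : ℕ) (hP : 1 ≤ P) (hp : 1 ≤ p) (hpP : p ≤ P) (t : ℝ) :
    ((Measure.pi (fun _ : Fin P => invGammaMeasure a m))
        {x : Fin P → ℝ | p ≤ (Finset.univ.filter (fun i => t < x i)).card}).toReal
      = ∑ i ∈ Finset.range p,
          ((p - 1).choose i : ℝ) * (-1) ^ i *
            ((P.factorial : ℝ) / (((P - p).factorial : ℝ) * ((p - 1).factorial : ℝ))) *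
            (1 - invGammaCDF a m t ^ (P - p + i + 1)) / ((P - p + i + 1 : ℕ) : ℝ) := by
  have := isProbabilityMeasure_invGammaMeasure ha m
  simpa [invGammaCDF, measureReal_def, ncard_eq_toFinset_card'] using
    outage_probability_ordered_user_general (ι := Fin P) (invGammaMeasure a m)
      (measurableSet_Iic (a := t)) hp (by simpa)
end

section
/- Fix ξ₁, ξ₂ > 0 and a function τ : (0,∞) → (0,∞) with τ(ρ) ≤ min(1/(ρξ₁), 1/(ρξ₂)) for every ρ. For each ρ > 0 set τ̃ = 1/τ(ρ), t_i = ρξ_i, and φ_i = max(τ̃, t_i) for i = 1,2. Let X, Y be i.i.d. with law μ_{a,m} and let B be uniform on {1,2}, independent of (X,Y); write Mx = max(X,Y), Mn = min(X,Y). Define the strong user's one-bit-feedback outage event E₂(ρ) = ({Mn < τ̃ ≤ Mx} ∩ {Mn > t₂}) ∪ ({Mx < τ̃} ∩ {Mn > t_B}) ∪ ({Mn ≥ τ̃} ∩ {Mn > φ_B}). Then there exist constants 0 < c ≤ C and ρ₀ > 0 such that for all ρ ≥ ρ₀, c · ρ^{-2(m+1)} ≤ P(E₂(ρ)) ≤ C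 · ρ^{-2(m+1)}. Hence with one-bit feedback the strong user achieves diversity order 2(m+1), the same as with perfect user ordering. -/
open MeasureTheory ProbabilityTheory

/-!
The outage event is contained in `{Mn > min t₁ t₂}` and contains `{Mn > max t₁ t₂}` up to the
null event `{Mn = τ̃}`. Both have probability equal to the product of the tails of `X` and `Y` at
a fixed multiple of `ρ`, so the diversity order is the sum of the tail exponents. For
`μ_{a,m}` the exponent is `m + 1`, because the density is asymptotic to a constant times
`x^{-(m+2)}`.
-/

open Asymptotics Filter Set
open scoped Topology

/-- `P` has diversity order `d` if `P(ρ)` is bounded above and below by positive multiples of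
`ρ^{-d}` as `ρ → ∞`; this is stronger than the convergence of `-log P(ρ) / log ρ` to `d`.
The notion is also used for densities and tail functions. -/
def HasDiversityOrder (P : ℝ → ℝ) (d : ℕ) : Prop :=
  P =Θ[atTop] fun ρ => (ρ ^ d)⁻¹

section DiversityOrder

variable {P Q R : ℝ → ℝ} {d e : ℕ}

lemma HasDiversityOrder.mul (hP : HasDiversityOrder P d) (hQ : HasDiversityOrder Q e) :
    HasDiversityOrder (fun ρ => P ρ * Q ρ) (d + e) := by
  simpa only [HasDiversityOrder, pow_add, mul_inv] using IsTheta.mul hP hQ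

lemma HasDiversityOrder.comp_mul_const (hP : HasDiversityOrder P d) {c : ℝ} (hc : 0 < c) :
    HasDiversityOrder (fun ρ => P (ρ * c)) d := by
  have hscale : Tendsto (fun ρ : ℝ => ρ * c) atTop atTop := tendsto_id.atTop_mul_const hc
  have hcomp : (fun ρ => P (ρ * c)) =Θ[atTop] fun ρ => ((ρ * c) ^ d)⁻¹ :=
    ⟨hP.1.comp_tendsto hscale, hP.2.comp_tendsto hscale⟩
  simp only [mul_pow, mul_inv, mul_comm _ (c ^ d)⁻¹] at hcomp
  exact (isTheta_const_mul_right (by positivity)).1 hcomp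

lemma HasDiversityOrder.squeeze (hP : HasDiversityOrder P d) (hR : HasDiversityOrder R d)
    (hP0 : 0 ≤ P) (hPQ : P ≤ᶠ[atTop] Q) (hQR : Q ≤ᶠ[atTop] R) : HasDiversityOrder Q d := by
  have hPQ' : P =O[atTop] Q := Eventually.isBigO <| hPQ.mono fun ρ h =>
    (Real.norm_of_nonneg (hP0 ρ)).trans_le h
  have hQR' : Q =O[atTop] R := Eventually.isBigO <| (hPQ.and hQR).mono fun ρ h =>
    (Real.norm_of_nonneg ((hP0 ρ).trans h.1)).trans_le h.2
  exact ⟨hQR'.trans hR.1, hP.2.trans hPQ'⟩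

lemma hasDiversityOrder_iff_exists_bounds (hP : 0 ≤ P) :
    HasDiversityOrder P d ↔ ∃ c C ρ₀ : ℝ, 0 < c ∧ c ≤ C ∧ 0 < ρ₀ ∧
      ∀ ρ, ρ₀ ≤ ρ → c / ρ ^ d ≤ P ρ ∧ P ρ ≤ C / ρ ^ d := by
  have hnorm : ∀ ρ : ℝ, 0 < ρ → ‖(ρ ^ d)⁻¹‖ = (ρ ^ d)⁻¹ := fun ρ hρ =>
    Real.norm_of_nonneg (by positivity)
  constructor
  · rintro ⟨hupper, hlower⟩
    obtain ⟨C, hC⟩ := hupper.bound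
    obtain ⟨c, hc, hcP⟩ := isBigO_iff''.1 hlower
    obtain ⟨ρ₁, hbounds⟩ := eventually_atTop.1 (hC.and hcP)
    refine ⟨c, max c C, max 1 ρ₁, hc, le_max_left c C, by positivity, fun ρ hρ => ?_⟩
    have hρ0 : 0 < ρ := one_pos.trans_le ((le_max_left 1 ρ₁).trans hρ)
    obtain ⟨hCρ, hcρ⟩ := hbounds ρ ((le_max_right 1 ρ₁).trans hρ)
    rw [Real.norm_of_nonneg (hP ρ), hnorm ρ hρ0, ← div_eq_mul_inv] at hCρ hcρ
    exact ⟨hcρ, hCρ.trans (by gcongr; exact le_max_right c C)⟩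
  · rintro ⟨c, C, ρ₀, hc, -, hρ₀, hbounds⟩
    have hnorm_bounds : ∀ᶠ ρ in atTop, c * ‖(ρ ^ d)⁻¹‖ ≤ ‖P ρ‖ ∧ ‖P ρ‖ ≤ C * ‖(ρ ^ d)⁻¹‖ := by
      filter_upwards [eventually_ge_atTop ρ₀] with ρ hρ
      rw [Real.norm_of_nonneg (hP ρ), hnorm ρ (hρ₀.trans_le hρ)]
      exact hbounds ρ hρ
    exact ⟨IsBigO.of_bound C (hnorm_bounds.mono fun _ h => h.2),
      isBigO_iff''.2 ⟨c, hc, hnorm_bounds.mono fun _ h => h.1⟩⟩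

end DiversityOrder

lemma lintegral_Ioi_const_div_pow (k : ℕ) {D t : ℝ} (hD : 0 ≤ D) (ht : 0 < t) :
    ∫⁻ x in Ioi t, ENNReal.ofReal (D / x ^ (k + 2)) =
      ENNReal.ofReal (D / (k + 1) / t ^ (k + 1)) := by
  have hexp : -((k + 2 : ℕ) : ℝ) < -1 := by push_cast; linarith [k.cast_nonneg (α := ℝ)]
  have hrpow : EqOn (fun x : ℝ => D * x ^ (-((k + 2 : ℕ) : ℝ))) (fun x => D / x ^ (k + 2))
      (Ioi t) := fun x hx => by
    simp only [Real.rpow_neg (ht.trans hx).le, Real.rpow_natCast, div_eq_mul_inv]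
  have hint : IntegrableOn (fun x : ℝ => D / x ^ (k + 2)) (Ioi t) :=
    IntegrableOn.congr_fun ((integrableOn_Ioi_rpow_of_lt hexp ht).const_mul D) hrpow
      measurableSet_Ioi
  have hnonneg : 0 ≤ᵐ[volume.restrict (Ioi t)] fun x : ℝ => D / x ^ (k + 2) := by
    filter_upwards [ae_restrict_mem measurableSet_Ioi] with x hx
    have hx0 : 0 < x := ht.trans hx
    exact div_nonneg hD (by positivity)
  rw [← ofReal_integral_eq_lintegral_ofReal hint hnonneg,
    ← setIntegral_congr_fun measurableSet_Ioi hrpow, integral_const_mul,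
    integral_Ioi_rpow_of_lt hexp ht,
    show -((k + 2 : ℕ) : ℝ) + 1 = -((k + 1 : ℕ) : ℝ) by push_cast; ring,
    Real.rpow_neg ht.le, Real.rpow_natCast]
  congr 1
  push_cast
  field_simp

lemma HasDiversityOrder.withDensity_Ioi {f : ℝ → ℝ} {k : ℕ} (hf : HasDiversityOrder f (k + 2))
    (hf0 : 0 ≤ f) :
    HasDiversityOrder
      (fun t => (volume.withDensity fun x => ENNReal.ofReal (f x)).real (Ioi t)) (k + 1) := by
  obtain ⟨c, C, x₀, hc, hcC, hx₀, hbounds⟩ := (hasDiversityOrder_iff_exists_bounds hf0).1 hf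
  have hC : 0 < C := hc.trans_le hcC
  refine (hasDiversityOrder_iff_exists_bounds fun _ => measureReal_nonneg).2
    ⟨c / (k + 1), C / (k + 1), x₀, by positivity, by gcongr, hx₀, fun t ht => ?_⟩
  have ht0 : 0 < t := hx₀.trans_le ht
  rw [measureReal_def, withDensity_apply _ measurableSet_Ioi]
  have hlower : ENNReal.ofReal (c / (k + 1) / t ^ (k + 1)) ≤
      ∫⁻ x in Ioi t, ENNReal.ofReal (f x) := by
    rw [← lintegral_Ioi_const_div_pow k hc.le ht0]
    exact setLIntegral_mono' measurableSet_Ioi fun x hx =>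
      ENNReal.ofReal_le_ofReal (hbounds x (ht.trans hx.le)).1
  have hupper : ∫⁻ x in Ioi t, ENNReal.ofReal (f x) ≤
      ENNReal.ofReal (C / (k + 1) / t ^ (k + 1)) := by
    rw [← lintegral_Ioi_const_div_pow k hC.le ht0]
    exact setLIntegral_mono' measurableSet_Ioi fun x hx =>
      ENNReal.ofReal_le_ofReal (hbounds x (ht.trans hx.le)).2
  exact ⟨(ENNReal.ofReal_le_iff_le_toReal (hupper.trans_lt ENNReal.ofReal_lt_top).ne).1 hlower,
    ENNReal.toReal_le_of_le_ofReal (by positivity) hupper⟩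

section InverseGamma

variable {a : ℝ}

lemma invGammaDensity_nonneg (ha : 0 ≤ a) (m : ℕ) : 0 ≤ invGammaDensity a m := by
  intro x
  unfold invGammaDensity
  split_ifs <;> simp only [Pi.zero_apply] <;> positivity

lemma hasDiversityOrder_invGammaDensity (ha : a ≠ 0) (m : ℕ) :
    HasDiversityOrder (invGammaDensity a m) (m + 2) := by
  have hexp : Tendsto (fun x : ℝ => Real.exp (-(1 / (a * x)))) atTop (𝓝 1) := by
    refine Real.tendsto_exp_nhds_zero_nhds_one.comp ?_
    simpa [mul_comm] using (tendsto_inv_atTop_zero.mul_const a⁻¹).neg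
  refine (isTheta_of_div_tendsto_nhds_ne_zero
    ((hexp.div_const (m.factorial * a ^ (m + 1))).congr' ?_) (by positivity)).symm
  filter_upwards [eventually_gt_atTop 0] with x hx
  have hzpow : x ^ (-((m : ℤ) + 2)) = (x ^ (m + 2))⁻¹ := by
    rw [zpow_neg]; norm_cast
  rw [invGammaDensity, if_pos hx, hzpow]
  field_simp

lemma hasDiversityOrder_invGammaMeasure_Ioi (ha : 0 < a) (m : ℕ) :
    HasDiversityOrder (fun t => (invGammaMeasure a m).real (Ioi t)) (m + 1) :=
  (hasDiversityOrder_invGammaDensity ha.ne' m).withDensity_Ioi (invGammaDensity_nonneg ha.le m)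

instance nullSingletonClass_invGammaMeasure (a : ℝ) (m : ℕ) :
    NullSingletonClass (invGammaMeasure a m) :=
  nullSingletonClass_withDensity _

end InverseGamma

section StrongUser

variable {Ω : Type*}

/-- The outage event `E₂` of the strong user for thresholds `t₁, t₂` (the `ρ ξᵢ`) and `s` (the
`τ̃`). Any value of `B` other than `1` stands for position `2`. -/
def strongUserOutage (X Y : Ω → ℝ) (B : Ω → ℕ) (s t₁ t₂ : ℝ) : Set Ω :=
  {ω | (min (X ω) (Y ω) < s ∧ s ≤ max (X ω) (Y ω) ∧ t₂ < min (X ω) (Y ω)) ∨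
    (max (X ω) (Y ω) < s ∧ (if B ω = 1 then t₁ else t₂) < min (X ω) (Y ω)) ∨
    (s ≤ min (X ω) (Y ω) ∧ (if B ω = 1 then max s t₁ else max s t₂) < min (X ω) (Y ω))}

variable {X Y : Ω → ℝ}

lemma strongUserOutage_subset (B : Ω → ℕ) (s t₁ t₂ : ℝ) :
    strongUserOutage X Y B s t₁ t₂ ⊆ {ω | min t₁ t₂ < min (X ω) (Y ω)} := by
  rintro ω (⟨-, -, h⟩ | ⟨-, h⟩ | ⟨-, h⟩)
  · exact min_lt_of_right_lt h
  · split_ifs at h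
    exacts [min_lt_of_left_lt h, min_lt_of_right_lt h]
  · split_ifs at h
    exacts [min_lt_of_left_lt (max_lt_iff.1 h).2, min_lt_of_right_lt (max_lt_iff.1 h).2]

lemma mem_strongUserOutage_of_max_lt_min (B : Ω → ℕ) {s t₁ t₂ : ℝ} {ω : Ω}
    (ht : max t₁ t₂ < min (X ω) (Y ω)) (hs : min (X ω) (Y ω) ≠ s) :
    ω ∈ strongUserOutage X Y B s t₁ t₂ := by
  obtain ⟨ht₁, ht₂⟩ := max_lt_iff.1 ht
  rcases hs.lt_or_gt with hmin | hmin
  · rcases lt_or_ge (max (X ω) (Y ω)) s with hmax | hmax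
    · exact .inr (.inl ⟨hmax, by split_ifs <;> assumption⟩)
    · exact .inl ⟨hmin, hmax, ht₂⟩
  · refine .inr (.inr ⟨hmin.le, ?_⟩)
    split_ifs
    exacts [max_lt hmin ht₁, max_lt hmin ht₂]

variable [MeasurableSpace Ω] {μ : Measure Ω} {ν₁ ν₂ : Measure ℝ}

lemma measureReal_lt_min (hX : HasLaw X ν₁ μ) (hY : HasLaw Y ν₂ μ) (hXY : IndepFun X Y μ)
    (t : ℝ) :
    μ.real {ω | t < min (X ω) (Y ω)} = ν₁.real (Ioi t) * ν₂.real (Ioi t) :=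
  calc μ.real {ω | t < min (X ω) (Y ω)}
    _ = μ.real (X ⁻¹' Ioi t ∩ Y ⁻¹' Ioi t) := by simp only [lt_min_iff]; rfl
    _ = μ.real (X ⁻¹' Ioi t) * μ.real (Y ⁻¹' Ioi t) := by
      simp only [measureReal_def, ← ENNReal.toReal_mul,
        hXY.measure_inter_preimage_eq_mul _ _ measurableSet_Ioi measurableSet_Ioi]
    _ = ν₁.real (Ioi t) * ν₂.real (Ioi t) :=
      congr_arg₂ _ (hX.measureReal_eq measurableSet_Ioi) (hY.measureReal_eq measurableSet_Ioi)

lemma ae_min_ne [NullSingletonClass ν₁] [NullSingletonClass ν₂] (hX : HasLaw X ν₁ μ)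
    (hY : HasLaw Y ν₂ μ) (s : ℝ) : ∀ᵐ ω ∂μ, min (X ω) (Y ω) ≠ s := by
  have hXs : ∀ᵐ ω ∂μ, X ω ≠ s := ae_of_ae_map hX.aemeasurable (hX.map_eq ▸ ν₁.ae_ne s)
  have hYs : ∀ᵐ ω ∂μ, Y ω ≠ s := ae_of_ae_map hY.aemeasurable (hY.map_eq ▸ ν₂.ae_ne s)
  filter_upwards [hXs, hYs] with ω hXω hYω
  rcases min_choice (X ω) (Y ω) with h | h <;> rwa [h]

theorem one_bit_feedback_strong_user_diversity_order_general [IsFiniteMeasure μ]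
    [NullSingletonClass ν₁] [NullSingletonClass ν₂] {j k : ℕ}
    (hν₁ : HasDiversityOrder (fun t => ν₁.real (Ioi t)) j)
    (hν₂ : HasDiversityOrder (fun t => ν₂.real (Ioi t)) k)
    (hX : HasLaw X ν₁ μ) (hY : HasLaw Y ν₂ μ) (hXY : IndepFun X Y μ)
    (B : Ω → ℕ) (s : ℝ → ℝ) {ξ₁ ξ₂ : ℝ} (hξ₁ : 0 < ξ₁) (hξ₂ : 0 < ξ₂) :
    HasDiversityOrder (fun ρ => μ.real (strongUserOutage X Y B (s ρ) (ρ * ξ₁) (ρ * ξ₂)))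
      (j + k) := by
  have hmin : HasDiversityOrder (fun t => μ.real {ω | t < min (X ω) (Y ω)}) (j + k) := by
    simpa only [measureReal_lt_min hX hY hXY] using hν₁.mul hν₂
  refine (hmin.comp_mul_const (lt_max_of_lt_left hξ₁ : 0 < max ξ₁ ξ₂)).squeeze
    (hmin.comp_mul_const (lt_min hξ₁ hξ₂)) (fun _ => measureReal_nonneg) ?_ ?_
  · filter_upwards [eventually_ge_atTop 0] with ρ hρ
    refine ENNReal.toReal_mono (measure_ne_top μ _) (measure_mono_ae ?_)
    filter_upwards [ae_min_ne hX hY (s ρ)] with ω hω hlt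
    exact mem_strongUserOutage_of_max_lt_min B (by rwa [← mul_max_of_nonneg _ _ hρ]) hω
  · filter_upwards [eventually_ge_atTop 0] with ρ hρ
    rw [mul_min_of_nonneg _ _ hρ]
    exact measureReal_mono (strongUserOutage_subset B (s ρ) (ρ * ξ₁) (ρ * ξ₂))

end StrongUser

/-- Lemma 1: with one-bit feedback the strong user achieves diversity order `2(m+1)`,
the same as with perfect user ordering. Here `X, Y` are i.i.d. with law `μ_{a,m}`,
`B` is uniform on `{1,2}` independent of `(X,Y)`, `Mx = max(X,Y)`, `Mn = min(X,Y)`,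
and for each `ρ > 0` we set `τ̃ = 1/τ(ρ)`, `t_i = ρ ξ_i`, `φ_i = max(τ̃, t_i)`; the
strong user's outage event is
`E₂(ρ) = ({Mn < τ̃ ≤ Mx} ∩ {Mn > t₂}) ∪ ({Mx < τ̃} ∩ {Mn > t_B}) ∪ ({Mn ≥ τ̃} ∩ {Mn > φ_B})`,
and there are constants `0 < c ≤ C` with `c ρ^{-2(m+1)} ≤ P(E₂(ρ)) ≤ C ρ^{-2(m+1)}`
for all sufficiently large `ρ`. -/
theorem one_bit_feedback_strong_user_diversity_order
    (a : ℝ) (ha : 0 < a) (m : ℕ)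
    (ξ₁ ξ₂ : ℝ) (hξ₁ : 0 < ξ₁) (hξ₂ : 0 < ξ₂)
    (τ : ℝ → ℝ) (hτpos : ∀ ρ : ℝ, 0 < ρ → 0 < τ ρ)
    (hτ : ∀ ρ : ℝ, 0 < ρ → τ ρ ≤ min (1 / (ρ * ξ₁)) (1 / (ρ * ξ₂)))
    {Ω : Type*} [MeasureSpace Ω] [IsProbabilityMeasure (ℙ : Measure Ω)]
    (X Y : Ω → ℝ) (B : Ω → ℕ)
    (hX : Measurable X) (hY : Measurable Y) (hB : Measurable B)
    (hXlaw : Measure.map X ℙ = invGammaMeasure a m)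
    (hYlaw : Measure.map Y ℙ = invGammaMeasure a m)
    (hXY : IndepFun X Y ℙ)
    (hXYB : IndepFun (fun ω => (X ω, Y ω)) B ℙ)
    (hB1 : ℙ {ω | B ω = 1} = 1/2) (hB2 : ℙ {ω | B ω = 2} = 1/2) :
    ∃ c C ρ₀ : ℝ, 0 < c ∧ c ≤ C ∧ 0 < ρ₀ ∧ ∀ ρ : ℝ, ρ₀ ≤ ρ →
      c / ρ ^ (2 * (m + 1)) ≤
        (ℙ {ω |
          (min (X ω) (Y ω) < (τ ρ)⁻¹ ∧ (τ ρ)⁻¹ ≤ max (X ω) (Y ω) ∧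
            ρ * ξ₂ < min (X ω) (Y ω)) ∨
          (max (X ω) (Y ω) < (τ ρ)⁻¹ ∧
            (if B ω = 1 then ρ * ξ₁ else ρ * ξ₂) < min (X ω) (Y ω)) ∨
          ((τ ρ)⁻¹ ≤ min (X ω) (Y ω) ∧
            (if B ω = 1 then max (τ ρ)⁻¹ (ρ * ξ₁) else max (τ ρ)⁻¹ (ρ * ξ₂))
              < min (X ω) (Y ω))}).toReal ∧
      (ℙ {ω |
          (min (X ω) (Y ω) < (τ ρ)⁻¹ ∧ (τ ρ)⁻¹ ≤ max (X ω) (Y ω) ∧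
            ρ * ξ₂ < min (X ω) (Y ω)) ∨
          (max (X ω) (Y ω) < (τ ρ)⁻¹ ∧
            (if B ω = 1 then ρ * ξ₁ else ρ * ξ₂) < min (X ω) (Y ω)) ∨
          ((τ ρ)⁻¹ ≤ min (X ω) (Y ω) ∧
            (if B ω = 1 then max (τ ρ)⁻¹ (ρ * ξ₁) else max (τ ρ)⁻¹ (ρ * ξ₂))
              < min (X ω) (Y ω))}).toReal ≤
        C / ρ ^ (2 * (m + 1)) := by
  have htail := hasDiversityOrder_invGammaMeasure_Ioi ha m
  have hE := one_bit_feedback_strong_user_diversity_order_general htail htail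
    ⟨hX.aemeasurable, hXlaw⟩ ⟨hY.aemeasurable, hYlaw⟩ hXY B (fun ρ => (τ ρ)⁻¹) hξ₁ hξ₂
  rw [← two_mul] at hE
  exact (hasDiversityOrder_iff_exists_bounds fun _ => measureReal_nonneg).1 hE
end

section
/- Let X, Y be i.i.d. real random variables whose common CDF F is continuous, and let B be uniform on {1,2}, independent of (X,Y); write Mx = max(X,Y), Mn = min(X,Y). Let τ̃ > 0 and t₁, t₂ ≥ 0, and set φ_i = max(τ̃, t_i). Define the weak user's one-bit-feedback outage event E₁ = ({Mn < τ̃ ≤ Mx} ∩ {Mx > t₁}) ∪ ({Mn ≥ τ̃} ∩ {Mx > φ_B}) ∪ ({Mx < τ̃} ∩ {Mx > t_B}). Then P(E₁) = 2(1 - F(φ₁))F(τ̃) + (1/2)∑_{i=1}^{2}(1 - F(φ_i)²) - ∑_{i=1}^{2} F(τ̃)(1 - F(φ_i)) + (1/2)∑_{i=1}^{2} [F(τ̃)² - F(t_i)²]⁺, where [x]⁺ = max(0,x). -/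
open MeasureTheory ProbabilityTheory

/-! Condition on the tie-breaking bit `B`, so that the outage level `t` is a constant, and split
according to how many of the two users exceed `τ`. If exactly one does, the outage event is a pair
of mirrored rectangles. If both or neither do, it is a difference `s ×ˢ s \ u ×ˢ u`, since
`{max ≤ t}` is the square `Iic t ×ˢ Iic t`. Only the atom at `τ` could distinguish strict from weak
comparisons in the resulting intervals, and it is null. -/

section Events

open Set

variable {α : Type*} [LinearOrder α]

/-- The outage event of the weak user when exactly one of the noise powers `p.1`, `p.2` reaches the
threshold `τ`; the weak user then has outage level `a`. -/
def splitOutage (τ a : α) : Set (α × α) :=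
  {p | min p.1 p.2 < τ ∧ τ ≤ max p.1 p.2 ∧ a < max p.1 p.2}

/-- The outage event of the weak user, at outage level `b`, when both noise powers reach the
threshold `τ`. -/
def bothAboveOutage (τ b : α) : Set (α × α) :=
  {p | τ ≤ min p.1 p.2 ∧ b < max p.1 p.2}

/-- The outage event of the weak user, at outage level `t`, when both noise powers are below the
threshold `τ`. -/
def bothBelowOutage (τ t : α) : Set (α × α) :=
  {p | max p.1 p.2 < τ ∧ t < max p.1 p.2}

/-- The outage event of the weak user as a set of pairs of noise powers, for a fixed outcome of the
tie-breaking bit: `a` is the outage level when the feedback separates the users, and `t` is the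
level of the position drawn for the weak user when it does not. -/
def weakOutage (τ a t : α) : Set (α × α) :=
  splitOutage τ a ∪ (bothAboveOutage τ (max τ t) ∪ bothBelowOutage τ t)

lemma splitOutage_eq_union_prod (τ a : α) :
    splitOutage τ a = Iio τ ×ˢ (Ici τ ∩ Ioi a) ∪ (Ici τ ∩ Ioi a) ×ˢ Iio τ := by
  ext ⟨x, y⟩
  simp only [splitOutage, mem_ofPred_eq, mem_union, mem_prod, mem_inter_iff, mem_Iio, mem_Ici,
    mem_Ioi]
  grind

lemma bothAboveOutage_eq_sdiff (τ b : α) :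
    bothAboveOutage τ b = Ici τ ×ˢ Ici τ \ Iic b ×ˢ Iic b := by
  ext ⟨x, y⟩
  simp only [bothAboveOutage, mem_ofPred_eq, mem_sdiff, mem_prod, mem_Ici, mem_Iic, le_min_iff,
    ← max_le_iff, not_le]

lemma bothBelowOutage_eq_sdiff (τ t : α) :
    bothBelowOutage τ t = Iio τ ×ˢ Iio τ \ Iic t ×ˢ Iic t := by
  ext ⟨x, y⟩
  simp only [bothBelowOutage, mem_ofPred_eq, mem_sdiff, mem_prod, mem_Iio, mem_Iic, max_lt_iff,
    ← max_le_iff, not_le]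

lemma disjoint_bothAboveOutage_bothBelowOutage (τ b t : α) :
    Disjoint (bothAboveOutage τ b) (bothBelowOutage τ t) :=
  disjoint_left.2 fun _ habove hbelow =>
    (habove.1.trans min_le_max).not_gt hbelow.1

lemma disjoint_splitOutage_union (τ a b t : α) :
    Disjoint (splitOutage τ a) (bothAboveOutage τ b ∪ bothBelowOutage τ t) :=
  disjoint_left.2 fun _ hsplit hboth =>
    hboth.elim (fun habove => habove.1.not_gt hsplit.1) fun hbelow => hsplit.2.1.not_gt hbelow.1

variable [TopologicalSpace α] [OrderClosedTopology α] [MeasurableSpace α] [OpensMeasurableSpace α]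

lemma measurableSet_splitOutage (τ a : α) : MeasurableSet (splitOutage τ a) := by
  have hupper : MeasurableSet (Ici τ ∩ Ioi a) := measurableSet_Ici.inter measurableSet_Ioi
  rw [splitOutage_eq_union_prod]
  exact (measurableSet_Iio.prod hupper).union (hupper.prod measurableSet_Iio)

lemma measurableSet_bothAboveOutage (τ b : α) : MeasurableSet (bothAboveOutage τ b) := by
  rw [bothAboveOutage_eq_sdiff]
  exact (measurableSet_Ici.prod measurableSet_Ici).diff (measurableSet_Iic.prod measurableSet_Iic)

lemma measurableSet_bothBelowOutage (τ t : α) : MeasurableSet (bothBelowOutage τ t) := by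
  rw [bothBelowOutage_eq_sdiff]
  exact (measurableSet_Iio.prod measurableSet_Iio).diff (measurableSet_Iic.prod measurableSet_Iic)

lemma measurableSet_weakOutage (τ a t : α) : MeasurableSet (weakOutage τ a t) :=
  (measurableSet_splitOutage τ a).union
    ((measurableSet_bothAboveOutage τ _).union (measurableSet_bothBelowOutage τ t))

end Events

lemma measureReal_prod_self_sdiff_prod_self {α : Type*} [MeasurableSpace α] (ν : Measure α)
    [IsFiniteMeasure ν] (s : Set α) {u : Set α} (hu : MeasurableSet u) :
    (ν.prod ν).real (s ×ˢ s \ u ×ˢ u) = ν.real s ^ 2 - ν.real (s ∩ u) ^ 2 := by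
  have hsplit := measureReal_inter_add_sdiff (μ := ν.prod ν) (s := s ×ˢ s) (hu.prod hu)
  rw [Set.prod_inter_prod, measureReal_prod_prod, measureReal_prod_prod] at hsplit
  linear_combination hsplit

section Law

open Set

variable {α : Type*} [LinearOrder α] [TopologicalSpace α] [OrderClosedTopology α]
  [MeasurableSpace α] [OpensMeasurableSpace α] {ν : Measure α} {τ : α}

lemma measureReal_prod_splitOutage [IsProbabilityMeasure ν] (hτ : ν {τ} = 0) (a : α) :
    (ν.prod ν).real (splitOutage τ a) =
      2 * (1 - ν.real (Iic (max τ a))) * ν.real (Iic τ) := by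
  have hupper : ν.real (Ici τ ∩ Ioi a) = 1 - ν.real (Iic (max τ a)) := by
    rw [← measureReal_congr ((Ioi_ae_eq_Ici' hτ).inter (ae_eq_refl (Ioi a))), Ioi_inter_Ioi,
      ← compl_Iic, probReal_compl_eq_one_sub measurableSet_Iic]
  have hdisj : Disjoint (Iio τ ×ˢ (Ici τ ∩ Ioi a)) ((Ici τ ∩ Ioi a) ×ˢ Iio τ) :=
    disjoint_prod.2 (.inl ((Iio_disjoint_Ici le_rfl).mono_right inter_subset_left))
  rw [splitOutage_eq_union_prod,
    measureReal_union hdisj ((measurableSet_Ici.inter measurableSet_Ioi).prod measurableSet_Iio),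
    measureReal_prod_prod, measureReal_prod_prod, hupper, measureReal_congr (Iio_ae_eq_Iic' hτ)]
  ring

lemma measureReal_prod_bothAboveOutage [IsProbabilityMeasure ν] (hτ : ν {τ} = 0) {b : α}
    (hb : τ ≤ b) :
    (ν.prod ν).real (bothAboveOutage τ b) =
      (1 - ν.real (Iic b) ^ 2) - 2 * (ν.real (Iic τ) * (1 - ν.real (Iic b))) := by
  have hIci : ν.real (Ici τ) = 1 - ν.real (Iic τ) := by
    rw [← measureReal_congr (Ioi_ae_eq_Ici' hτ), ← compl_Iic,
      probReal_compl_eq_one_sub measurableSet_Iic]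
  have hIcc : ν.real (Icc τ b) = ν.real (Iic b) - ν.real (Iic τ) := by
    rw [← measureReal_congr (Ioc_ae_eq_Icc' hτ), ← Iic_sdiff_Iic,
      measureReal_sdiff (Iic_subset_Iic.2 hb) measurableSet_Iic]
  rw [bothAboveOutage_eq_sdiff, measureReal_prod_self_sdiff_prod_self ν _ measurableSet_Iic,
    Ici_inter_Iic, hIci, hIcc]
  ring

lemma measureReal_prod_bothBelowOutage [IsFiniteMeasure ν] (hτ : ν {τ} = 0) (t : α) :
    (ν.prod ν).real (bothBelowOutage τ t) =
      max 0 (ν.real (Iic τ) ^ 2 - ν.real (Iic t) ^ 2) := by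
  have hmono : Monotone fun x => ν.real (Iic x) ^ 2 := fun _ _ hxy =>
    pow_le_pow_left₀ measureReal_nonneg (measureReal_mono (Iic_subset_Iic.2 hxy)) 2
  have hinter : ν.real (Iio τ ∩ Iic t) = ν.real (Iic (min τ t)) := by
    rw [measureReal_congr ((Iio_ae_eq_Iic' hτ).inter (ae_eq_refl (Iic t))), Iic_inter_Iic]
  calc (ν.prod ν).real (bothBelowOutage τ t)
      = ν.real (Iic τ) ^ 2 - ν.real (Iic (min τ t)) ^ 2 := by
        rw [bothBelowOutage_eq_sdiff, measureReal_prod_self_sdiff_prod_self ν _ measurableSet_Iic,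
          hinter, measureReal_congr (Iio_ae_eq_Iic' hτ)]
    _ = ν.real (Iic τ) ^ 2 - min (ν.real (Iic τ) ^ 2) (ν.real (Iic t) ^ 2) := by
        rw [hmono.map_min]
    _ = max 0 (ν.real (Iic τ) ^ 2 - ν.real (Iic t) ^ 2) := by
        rw [← max_sub_sub_left, sub_self]

lemma measureReal_prod_weakOutage [IsProbabilityMeasure ν] (hτ : ν {τ} = 0) (a t : α) :
    (ν.prod ν).real (weakOutage τ a t) =
      2 * (1 - ν.real (Iic (max τ a))) * ν.real (Iic τ)
        + ((1 - ν.real (Iic (max τ t)) ^ 2)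
          - 2 * (ν.real (Iic τ) * (1 - ν.real (Iic (max τ t)))))
        + max 0 (ν.real (Iic τ) ^ 2 - ν.real (Iic t) ^ 2) := by
  rw [weakOutage,
    measureReal_union (disjoint_splitOutage_union τ a _ t)
      ((measurableSet_bothAboveOutage τ _).union (measurableSet_bothBelowOutage τ t)),
    measureReal_union (disjoint_bothAboveOutage_bothBelowOutage τ _ t)
      (measurableSet_bothBelowOutage τ t),
    measureReal_prod_splitOutage hτ, measureReal_prod_bothAboveOutage hτ (le_max_left τ t),
    measureReal_prod_bothBelowOutage hτ, add_assoc]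

end Law

section RandomVariables

variable {Ω : Type*} [MeasurableSpace Ω] {P : Measure Ω}

lemma measureReal_ite_preimage_of_indepFun {β γ : Type*} [MeasurableSpace β] [MeasurableSpace γ]
    [IsProbabilityMeasure P] {Z : Ω → β} {B : Ω → γ} (hB : AEMeasurable B P)
    (hZB : IndepFun Z B P) {T : Set γ} (hT : MeasurableSet T) {S₁ S₂ : Set β}
    (hS₁ : MeasurableSet S₁) (hS₂ : MeasurableSet S₂) :
    P.real ((B ⁻¹' T).ite (Z ⁻¹' S₁) (Z ⁻¹' S₂)) =
      P.real (B ⁻¹' T) * P.real (Z ⁻¹' S₁) + (1 - P.real (B ⁻¹' T)) * P.real (Z ⁻¹' S₂) := by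
  have hBT : NullMeasurableSet (B ⁻¹' T) P := hB.nullMeasurableSet_preimage hT
  have hmul {S : Set β} {U : Set γ} (hS : MeasurableSet S) (hU : MeasurableSet U) :
      P.real (Z ⁻¹' S ∩ B ⁻¹' U) = P.real (Z ⁻¹' S) * P.real (B ⁻¹' U) := by
    simp only [Measure.real, hZB.measure_inter_preimage_eq_mul S U hS hU, ENNReal.toReal_mul]
  rw [← measureReal_inter_add_sdiff₀ hBT, Set.ite_inter_self, Set.ite_sdiff_self, Set.sdiff_eq,
    ← Set.preimage_compl, hmul hS₁ hT, hmul hS₂ hT.compl, Set.preimage_compl,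
    probReal_compl_eq_one_sub₀ hBT]
  ring

lemma measureReal_preimage_prodMk_of_iid {α : Type*} [MeasurableSpace α] [IsFiniteMeasure P]
    {X Y : Ω → α} (hid : IdentDistrib X Y P P) (hXY : IndepFun X Y P) {S : Set (α × α)}
    (hS : MeasurableSet S) :
    P.real ((fun ω => (X ω, Y ω)) ⁻¹' S) = ((P.map X).prod (P.map X)).real S := by
  have hlaw : P.map (fun ω => (X ω, Y ω)) = (P.map X).prod (P.map X) := by
    rw [(indepFun_iff_map_prod_eq_prod_map_map hid.aemeasurable_fst hid.aemeasurable_snd).1 hXY,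
      hid.map_eq]
  rw [← hlaw,
    map_measureReal_apply_of_aemeasurable (hid.aemeasurable_fst.prodMk hid.aemeasurable_snd) hS]

lemma measure_setOf_eq_eq_zero_of_continuousAt_cdf [IsProbabilityMeasure P] {X : Ω → ℝ}
    (hX : AEMeasurable X P) {F : ℝ → ℝ} (hF : ∀ x, F x = P.real {ω | X ω ≤ x}) {x : ℝ}
    (hFx : ContinuousAt F x) : P {ω | X ω = x} = 0 := by
  have : IsProbabilityMeasure (P.map X) := Measure.isProbabilityMeasure_map hX
  have hcdf : cdf (P.map X) = F := by
    funext y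
    rw [cdf_eq_real, map_measureReal_apply_of_aemeasurable hX measurableSet_Iic, hF]
    rfl
  calc P {ω | X ω = x} = P.map X {x} :=
        (Measure.map_apply_of_aemeasurable hX (measurableSet_singleton x)).symm
    _ = ENNReal.ofReal (F x - Function.leftLim F x) := by
        rw [← hcdf, ← StieltjesFunction.measure_singleton, measure_cdf]
    _ = 0 := by rw [hFx.continuousWithinAt.leftLim_eq, sub_self, ENNReal.ofReal_zero]

theorem one_bit_feedback_weak_user_outage_general
    {α : Type*} [LinearOrder α] [TopologicalSpace α] [OrderClosedTopology α]
    [MeasurableSpace α] [OpensMeasurableSpace α] [IsProbabilityMeasure P]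
    {X Y : Ω → α} {B : Ω → ℕ} (hid : IdentDistrib X Y P P) (hXY : IndepFun X Y P)
    (hB : AEMeasurable B P) (hXYB : IndepFun (fun ω => (X ω, Y ω)) B P)
    {p : ℝ} (hp : P.real {ω | B ω = 1} = p)
    {F : α → ℝ} (hF : ∀ x, F x = P.real {ω | X ω ≤ x})
    {τ : α} (hτ : P {ω | X ω = τ} = 0) (t₁ t₂ : α) :
    P.real {ω |
        (min (X ω) (Y ω) < τ ∧ τ ≤ max (X ω) (Y ω) ∧ t₁ < max (X ω) (Y ω)) ∨
        (τ ≤ min (X ω) (Y ω) ∧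
          (if B ω = 1 then max τ t₁ else max τ t₂) < max (X ω) (Y ω)) ∨
        (max (X ω) (Y ω) < τ ∧
          (if B ω = 1 then t₁ else t₂) < max (X ω) (Y ω))}
      = 2 * (1 - F (max τ t₁)) * F τ
        + (p * (1 - F (max τ t₁) ^ 2) + (1 - p) * (1 - F (max τ t₂) ^ 2))
        - 2 * (p * (F τ * (1 - F (max τ t₁))) + (1 - p) * (F τ * (1 - F (max τ t₂))))
        + (p * max 0 (F τ ^ 2 - F t₁ ^ 2) + (1 - p) * max 0 (F τ ^ 2 - F t₂ ^ 2)) := by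
  have hX := hid.aemeasurable_fst
  have : IsProbabilityMeasure (P.map X) := Measure.isProbabilityMeasure_map hX
  have hF_law (x : α) : (P.map X).real (Set.Iic x) = F x := by
    rw [map_measureReal_apply_of_aemeasurable hX measurableSet_Iic, hF]
    rfl
  have hτ_law : P.map X {τ} = 0 :=
    (Measure.map_apply_of_aemeasurable hX (measurableSet_singleton τ)).trans hτ
  have houtage (t : α) := (measureReal_preimage_prodMk_of_iid hid hXY
    (measurableSet_weakOutage τ t₁ t)).trans (measureReal_prod_weakOutage hτ_law t₁ t)
  simp only [hF_law] at houtage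
  calc
    _ = P.real ((B ⁻¹' {1}).ite ((fun ω => (X ω, Y ω)) ⁻¹' weakOutage τ t₁ t₁)
          ((fun ω => (X ω, Y ω)) ⁻¹' weakOutage τ t₁ t₂)) := by
        congr 1
        ext ω
        by_cases hω : B ω = 1 <;>
          simp [hω, Set.ite, weakOutage, splitOutage, bothAboveOutage, bothBelowOutage]
    _ = _ := by
        have hp' : P.real (B ⁻¹' {1}) = p := hp
        rw [measureReal_ite_preimage_of_indepFun hB hXYB (measurableSet_singleton 1)
          (measurableSet_weakOutage τ t₁ t₁) (measurableSet_weakOutage τ t₁ t₂),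
          houtage, houtage, hp']
        ring

end RandomVariables

/-- One-bit-feedback outage probability of the weak user (P = 2 case): for i.i.d. `X, Y`
with common continuous CDF `F`, `B` uniform on `{1,2}` independent of `(X,Y)`,
`Mx = max(X,Y)`, `Mn = min(X,Y)`, threshold `τ̃ > 0`, outage levels `t₁, t₂ ≥ 0` and
`φ_i = max(τ̃, t_i)`, the probability of the weak user's outage event
`E₁ = ({Mn < τ̃ ≤ Mx} ∩ {Mx > t₁}) ∪ ({Mn ≥ τ̃} ∩ {Mx > φ_B}) ∪ ({Mx < τ̃} ∩ {Mx > t_B})`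
equals
`2(1-F(φ₁))F(τ̃) + (1/2)∑ᵢ(1-F(φᵢ)²) - ∑ᵢ F(τ̃)(1-F(φᵢ)) + (1/2)∑ᵢ[F(τ̃)²-F(tᵢ)²]⁺`. -/
theorem one_bit_feedback_weak_user_outage
    {Ω : Type*} [MeasureSpace Ω] [IsProbabilityMeasure (ℙ : Measure Ω)]
    (X Y : Ω → ℝ) (B : Ω → ℕ)
    (hX : Measurable X) (hY : Measurable Y) (hB : Measurable B)
    (hXY : IndepFun X Y ℙ)
    (hid : Measure.map X ℙ = Measure.map Y ℙ)
    (hXYB : IndepFun (fun ω => (X ω, Y ω)) B ℙ)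
    (hB1 : ℙ {ω | B ω = 1} = 1/2) (hB2 : ℙ {ω | B ω = 2} = 1/2)
    (F : ℝ → ℝ) (hF : ∀ x, F x = (ℙ {ω | X ω ≤ x}).toReal)
    (hFcont : Continuous F)
    (τ' : ℝ) (hτ' : 0 < τ') (t₁ t₂ : ℝ) (ht₁ : 0 ≤ t₁) (ht₂ : 0 ≤ t₂) :
    (ℙ {ω |
        (min (X ω) (Y ω) < τ' ∧ τ' ≤ max (X ω) (Y ω) ∧ t₁ < max (X ω) (Y ω)) ∨
        (τ' ≤ min (X ω) (Y ω) ∧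
          (if B ω = 1 then max τ' t₁ else max τ' t₂) < max (X ω) (Y ω)) ∨
        (max (X ω) (Y ω) < τ' ∧
          (if B ω = 1 then t₁ else t₂) < max (X ω) (Y ω))}).toReal
      = 2 * (1 - F (max τ' t₁)) * F τ'
        + (1/2) * ((1 - F (max τ' t₁) ^ 2) + (1 - F (max τ' t₂) ^ 2))
        - (F τ' * (1 - F (max τ' t₁)) + F τ' * (1 - F (max τ' t₂)))
        + (1/2) * (max 0 (F τ' ^ 2 - F t₁ ^ 2) + max 0 (F τ' ^ 2 - F t₂ ^ 2)) := by
  have hatom : ℙ {ω | X ω = τ'} = 0 :=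
    measure_setOf_eq_eq_zero_of_continuousAt_cdf hX.aemeasurable hF hFcont.continuousAt
  have hhalf : (ℙ : Measure Ω).real {ω | B ω = 1} = 1 / 2 := by simp [Measure.real, hB1]
  refine (one_bit_feedback_weak_user_outage_general ⟨hX.aemeasurable, hY.aemeasurable, hid⟩ hXY
    hB.aemeasurable hXYB hhalf hF hatom t₁ t₂).trans ?_
  ring
end
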